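/- Let Ω ⊆ ℂ be an open set and k : ℂ → ℂ → ℂ a function such that: (i) for every ω ∈ Ω, the function z ↦ k z ω is analytic on Ω; (ii) k z ω = conj (k ω z) for all z, ω ∈ Ω. Then the function (z,w) ↦ k z (conj w) is jointly analytic on Ω × Ω* ⊆ ℂ × ℂ, where Ω* = {conj w : w ∈ Ω}; i.e. AnalyticOn ℂ (fun p : ℂ × ℂ => k p.1 (conj p.2)) (Ω ×ˢ Ω*). -/

import Mathlib

open ComplexConjugate Complex

/-!
By Hermitian symmetry `(z, w) ↦ k z (conj w)` is holomorphic in each variable separately, so the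
theorem is an instance of Hartogs' theorem. For a separately holomorphic `F`, Baire's theorem yields
a small disc of values of `z` on which `F` is bounded uniformly in `w`. Hence the Taylor
coefficients `cₙ(w)` of `F(·, w)` at its centre are holomorphic in `w` and `log⁺ ‖cₙ(w)‖ = O(n)`
uniformly. On a larger disc of radius `ρ`, `F(·, w)` is only known to be holomorphic for each fixed
`w`, so Cauchy's estimates give `n⁻¹ log⁺ ‖sⁿ cₙ‖ → 0` pointwise for `s < ρ`. These functions have
the sub-mean value property, which upgrades the pointwise limit to a locally uniform one: dominated
convergence sends their integrals to zero, and the value at a point is at most the average over a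
disc around it. So `(tⁿ cₙ(w))ₙ` is bounded in `ℓ^∞`, locally uniformly in `w`, for each `t < ρ`. It
is therefore an `ℓ^∞`-valued holomorphic function of `w`, and pairing it with the analytic map
sending `z` to the operator `x ↦ ∑ (z / t)ⁿ xₙ` recovers `F`.
-/

section Hartogs

open Filter Metric MeasureTheory Set
open scoped Real ENNReal Topology

variable {E : Type*} [NormedAddCommGroup E] [NormedSpace ℂ E]

lemma norm_sub_sub_smul_deriv_le {f : ℂ → E} {c z : ℂ} {r M : ℝ}
    (hf : DifferentiableOn ℂ f (ball c r)) (hM : ∀ x ∈ ball c r, ‖f x‖ ≤ M) (hz : z ∈ ball c r) :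
    ‖f z - f c - (z - c) • deriv f c‖ ≤ 4 * M * (‖z - c‖ / r) ^ 2 := by
  have hr : 0 < r := pos_of_mem_ball hz
  have hc : c ∈ ball c r := mem_ball_self hr
  have hosc : ∀ x ∈ ball c r, ‖f x - f c‖ ≤ 2 * M := fun x hx ↦
    (norm_sub_le _ _).trans (by linarith [hM x hx, hM c hc])
  have hderiv : ‖deriv f c‖ ≤ 2 * M / r :=
    norm_deriv_le_div_of_mapsTo_ball hf (fun x hx ↦ by simpa [dist_eq_norm] using hosc x hx) hr
  have hg : DifferentiableOn ℂ (fun x ↦ f x - (x - c) • deriv f c) (ball c r) := by fun_prop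
  have hmaps : MapsTo (fun x ↦ f x - (x - c) • deriv f c) (ball c r)
      (closedBall (f c - (c - c) • deriv f c) (4 * M)) := by
    intro x hx
    have hxr : ‖x - c‖ ≤ r := (mem_ball_iff_norm.1 hx).le
    calc dist (f x - (x - c) • deriv f c) (f c - (c - c) • deriv f c)
        = ‖(f x - f c) - (x - c) • deriv f c‖ := by
          rw [dist_eq_norm, sub_self, zero_smul, sub_zero, sub_right_comm]
      _ ≤ ‖f x - f c‖ + ‖x - c‖ * ‖deriv f c‖ := (norm_sub_le _ _).trans_eq (by rw [norm_smul])
      _ ≤ 2 * M + r * (2 * M / r) := by gcongr; exact hosc x hx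
      _ = 4 * M := by field_simp; ring
  have hlittle := ((hf.differentiableAt (isOpen_ball.mem_nhds hc)).hasDerivAt.isLittleO).norm_right
  simpa [dist_eq_norm, sub_right_comm] using
    dist_le_mul_div_pow_of_mapsTo_ball_of_isLittleO (n := 1) hg hmaps
      (by simpa [sub_right_comm] using hlittle) hz

lemma differentiableOn_deriv_of_norm_le [CompleteSpace E] {F : ℂ → ℂ → E} {c : ℂ} {r M : ℝ}
    {V : Set ℂ} (hr : 0 < r) (hV : IsOpen V)
    (hfst : ∀ w ∈ V, DifferentiableOn ℂ (F · w) (ball c r))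
    (hsnd : ∀ z ∈ ball c r, DifferentiableOn ℂ (F z) V)
    (hM : ∀ z ∈ ball c r, ∀ w ∈ V, ‖F z w‖ ≤ M) :
    DifferentiableOn ℂ (fun w ↦ deriv (F · w) c) V := by
  have hball : ball c r ∈ 𝓝[≠] c := mem_nhdsWithin_of_mem_nhds (ball_mem_nhds c hr)
  have hlim : TendstoUniformlyOn (fun z w ↦ slope (F · w) c z) (fun w ↦ deriv (F · w) c)
      (𝓝[≠] c) V := by
    have hsmall : Tendsto (fun z : ℂ ↦ 4 * M / r ^ 2 * ‖z - c‖) (𝓝[≠] c) (𝓝 0) :=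
      (Continuous.tendsto' (by fun_prop) _ _ (by simp)).mono_left nhdsWithin_le_nhds
    rw [Metric.tendstoUniformlyOn_iff]
    intro ε hε
    filter_upwards [hsmall.eventually_lt_const hε, hball, self_mem_nhdsWithin]
      with z hzε hz hzc w hw
    have hne : z - c ≠ 0 := sub_ne_zero.2 hzc
    refine lt_of_le_of_lt ?_ hzε
    calc dist (deriv (F · w) c) (slope (F · w) c z)
        = ‖z - c‖⁻¹ * ‖F z w - F c w - (z - c) • deriv (F · w) c‖ := by
          rw [dist_comm, dist_eq_norm, ← norm_inv, ← norm_smul, smul_sub (z - c)⁻¹ (F z w - F c w),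
            inv_smul_smul₀ hne, slope_def_module]
      _ ≤ ‖z - c‖⁻¹ * (4 * M * (‖z - c‖ / r) ^ 2) := by
          gcongr
          exact norm_sub_sub_smul_deriv_le (hfst w hw) (fun x hx ↦ hM x hx w hw) hz
      _ = 4 * M / r ^ 2 * ‖z - c‖ := by
          have := norm_ne_zero_iff.2 hne
          field_simp
  refine hlim.tendstoLocallyUniformlyOn.differentiableOn ?_ hV
  filter_upwards [hball] with z hz
  exact (((hsnd z hz).sub (hsnd c (mem_ball_self hr))).const_smul (z - c)⁻¹).congr fun w _ ↦
    slope_def_module _ _ _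

lemma differentiableOn_iteratedDeriv_of_norm_le [CompleteSpace E] {F : ℂ → ℂ → E} {c : ℂ}
    {r M : ℝ} {V : Set ℂ} (n : ℕ) (hr : 0 < r) (hV : IsOpen V)
    (hfst : ∀ w ∈ V, DifferentiableOn ℂ (F · w) (ball c r))
    (hsnd : ∀ z ∈ ball c r, DifferentiableOn ℂ (F z) V)
    (hM : ∀ z ∈ ball c r, ∀ w ∈ V, ‖F z w‖ ≤ M) :
    DifferentiableOn ℂ (fun w ↦ iteratedDeriv n (F · w) c) V := by
  induction n generalizing F r M with
  | zero => simpa only [iteratedDeriv_zero] using hsnd c (mem_ball_self hr)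
  | succ n ih =>
    have hsub : ∀ z ∈ ball c (r / 2), ball z (r / 2) ⊆ ball c r := fun z hz ↦
      ball_subset_ball' (by linarith [mem_ball.1 hz])
    simp only [iteratedDeriv_succ']
    refine ih (F := fun z w ↦ deriv (F · w) z) (r := r / 2) (M := 2 * M / (r / 2)) (half_pos hr)
      (fun w hw ↦ ((hfst w hw).deriv isOpen_ball).mono (ball_subset_ball (half_le_self hr.le)))
      (fun z hz ↦ differentiableOn_deriv_of_norm_le (half_pos hr) hV
        (fun w hw ↦ (hfst w hw).mono (hsub z hz)) (fun x hx ↦ hsnd x (hsub z hz hx))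
        fun x hx ↦ hM x (hsub z hz hx))
      fun z hz w hw ↦ norm_deriv_le_div_of_mapsTo_ball ((hfst w hw).mono (hsub z hz))
        (fun x hx ↦ ?_) (half_pos hr)
    rw [mem_closedBall, dist_eq_norm]
    exact (norm_sub_le _ _).trans (by
      linarith [hM x (hsub z hz hx) w hw, hM z (hsub z hz (mem_ball_self (half_pos hr))) w hw])

lemma differentiableOn_lp_infty {ι : Type*} {Φ : ℂ → lp (fun _ : ι ↦ E) ∞} {U : Set ℂ} {M : ℝ}
    (hU : IsOpen U) (hΦ : ∀ i, DifferentiableOn ℂ (fun z ↦ Φ z i) U) (hM : ∀ z ∈ U, ‖Φ z‖ ≤ M) :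
    DifferentiableOn ℂ Φ U := by
  intro c hc
  obtain ⟨r, hr, hrU⟩ := Metric.isOpen_iff.1 hU c hc
  have hM0 : 0 ≤ M := (norm_nonneg _).trans (hM c hc)
  have hcoord : ∀ i, ∀ z ∈ ball c r, ‖Φ z i‖ ≤ M := fun i z hz ↦
    (lp.norm_apply_le_norm ENNReal.top_ne_zero (Φ z) i).trans (hM z (hrU hz))
  let D : lp (fun _ : ι ↦ E) ∞ := ⟨fun i ↦ deriv (fun z ↦ Φ z i) c, memℓp_infty ⟨2 * M / r, by
    rintro _ ⟨i, rfl⟩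
    refine norm_deriv_le_div_of_mapsTo_ball ((hΦ i).mono hrU) (fun z hz ↦ ?_) hr
    rw [mem_closedBall, dist_eq_norm]
    exact (norm_sub_le _ _).trans (by linarith [hcoord i z hz, hcoord i c (mem_ball_self hr)])⟩⟩
  suffices HasDerivAt Φ D c from this.differentiableAt.differentiableWithinAt
  have hquad : (fun z ↦ Φ z - Φ c - (z - c) • D) =O[𝓝 c] fun z ↦ ‖z - c‖ ^ 2 := by
    refine Asymptotics.IsBigO.of_bound (4 * M / r ^ 2) ?_
    filter_upwards [ball_mem_nhds c hr] with z hz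
    refine lp.norm_le_of_forall_le (by positivity) fun i ↦ ?_
    calc ‖Φ z i - Φ c i - (z - c) • deriv (fun x ↦ Φ x i) c‖
        ≤ 4 * M * (‖z - c‖ / r) ^ 2 := norm_sub_sub_smul_deriv_le ((hΦ i).mono hrU) (hcoord i) hz
      _ = 4 * M / r ^ 2 * ‖‖z - c‖ ^ 2‖ := by rw [norm_pow, norm_norm]; ring
  exact hasDerivAt_iff_isLittleO.2
    (hquad.trans_isLittleO (Asymptotics.isLittleO_pow_sub_sub c one_lt_two))

lemma log_norm_le_circleAverage {f : ℂ → ℂ} {c : ℂ} {r : ℝ} (hr : 0 < r)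
    (hf : AnalyticOnNhd ℂ f (closedBall c r)) (hc : f c ≠ 0) :
    Real.log ‖f c‖ ≤ Real.circleAverage (fun z ↦ Real.log ‖f z‖) c r := by
  rw [← abs_of_pos hr] at hf
  rw [hf.circleAverage_log_norm hr.ne' hc, le_add_iff_nonneg_left]
  refine finsum_nonneg fun u ↦ ?_
  by_cases hu : u ∈ closedBall c |r|
  · refine mul_nonneg (by exact_mod_cast MeromorphicOn.AnalyticOnNhd.divisor_nonneg hf u) ?_
    rcases (norm_nonneg (c - u)).eq_or_lt with h | h
    · simp [← h]
    · rw [abs_of_pos hr, mem_closedBall', dist_eq_norm] at hu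
      exact Real.log_nonneg (by rwa [← div_eq_mul_inv, one_le_div h])
  · simp [hu]

lemma posLog_norm_le_circleAverage {f : ℂ → E} {c : ℂ} {r : ℝ} (hr : 0 < r)
    (hf : AnalyticOnNhd ℂ f (closedBall c r)) :
    log⁺ ‖f c‖ ≤ Real.circleAverage (fun z ↦ log⁺ ‖f z‖) c r := by
  obtain ⟨φ, hφ, hφc⟩ := exists_dual_vector'' ℂ (f c)
  have hφf : AnalyticOnNhd ℂ (φ ∘ f) (closedBall c r) := fun z hz ↦
    (φ.analyticAt (f z)).comp (hf z hz)
  have hnorm : ∀ z, ‖φ (f z)‖ ≤ ‖f z‖ := fun z ↦ by simpa using φ.le_of_opNorm_le hφ (f z)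
  have hsphere : sphere c |r| ⊆ closedBall c r := by
    rw [abs_of_pos hr]
    exact sphere_subset_closedBall
  have hnonneg : 0 ≤ Real.circleAverage (fun z ↦ log⁺ ‖f z‖) c r :=
    Real.circleAverage_nonneg_of_nonneg fun _ _ ↦ Real.posLog_nonneg
  refine max_le hnonneg ?_
  rcases eq_or_ne (f c) 0 with hc | hc
  · simpa [hc] using hnonneg
  calc Real.log ‖f c‖ = Real.log ‖(φ ∘ f) c‖ := by simp [hφc]
    _ ≤ Real.circleAverage (fun z ↦ Real.log ‖(φ ∘ f) z‖) c r :=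
      log_norm_le_circleAverage hr hφf (by simpa [hφc] using hc)
    _ ≤ Real.circleAverage (fun z ↦ log⁺ ‖f z‖) c r := by
      refine Real.circleAverage_mono (hφf.mono hsphere).meromorphicOn.circleIntegrable_log_norm
        (Real.continuous_posLog.comp_continuousOn
          (hf.continuousOn.norm.mono hsphere)).circleIntegrable' fun z _ ↦ ?_
      exact (le_max_right _ _).trans (Real.posLog_le_posLog (norm_nonneg _) (hnorm z))

lemma two_pi_smul_circleAverage_eq_integral {G : Type*} [NormedAddCommGroup G] [NormedSpace ℝ G]
    (u : ℂ → G) (c : ℂ) (r : ℝ) :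
    (2 * π) • Real.circleAverage u c r = ∫ θ in Ioo (-π) π, u (circleMap c r θ) := by
  rw [Real.circleAverage_eq_integral_add (-π), smul_inv_smul₀ Real.two_pi_pos.ne',
    intervalIntegral.integral_comp_add_right (fun θ ↦ u (circleMap c r θ)), zero_add,
    show 2 * π + -π = π by ring, intervalIntegral.integral_of_le (by linarith [Real.pi_pos]),
    integral_Ioc_eq_integral_Ioo]

lemma setIntegral_ball_eq_integral_circleAverage {G : Type*} [NormedAddCommGroup G]
    [NormedSpace ℝ G] {u : ℂ → G} {c : ℂ} {r : ℝ} (hr : 0 ≤ r)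
    (hu : ContinuousOn u (closedBall c r)) :
    ∫ z in ball c r, u z = ∫ t in 0..r, (2 * π * t) • Real.circleAverage u c t := by
  have hpolar : ∀ p : ℝ × ℝ, c + Complex.polarCoord.symm p = circleMap c p.1 p.2 := fun p ↦ by
    simp [circleMap, exp_mul_I]
  have hind : ∀ p ∈ Complex.polarCoord.target,
      p.1 • (ball c r).indicator u (c + Complex.polarCoord.symm p) =
        (Iio r ×ˢ univ).indicator (fun p : ℝ × ℝ ↦ p.1 • u (circleMap c p.1 p.2)) p := by
    intro p hp
    have hmem : circleMap c p.1 p.2 ∈ ball c r ↔ p ∈ Iio r ×ˢ (univ : Set ℝ) := by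
      have hp1 : 0 < p.1 := hp.1
      simp [dist_eq_norm, abs_of_pos hp1]
    by_cases h : p ∈ Iio r ×ˢ (univ : Set ℝ)
    · rw [hpolar, indicator_of_mem h, indicator_of_mem (hmem.2 h)]
    · rw [hpolar, indicator_of_notMem h, indicator_of_notMem (mt hmem.1 h), smul_zero]
  have hint : IntegrableOn (fun p : ℝ × ℝ ↦ p.1 • u (circleMap c p.1 p.2))
      (Ioo 0 r ×ˢ Ioo (-π) π) (volume.prod volume) := by
    refine (ContinuousOn.integrableOn_compact (isCompact_Icc.prod isCompact_Icc) ?_).mono_set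
      (prod_mono Ioo_subset_Icc_self Ioo_subset_Icc_self)
    refine continuousOn_fst.smul (hu.comp (by unfold circleMap; fun_prop) fun p hp ↦ ?_)
    exact closedBall_subset_closedBall hp.1.2 (circleMap_mem_closedBall c hp.1.1 p.2)
  calc ∫ z in ball c r, u z
      = ∫ z, (ball c r).indicator u (c + z) := by
        rw [integral_add_left_eq_self, integral_indicator measurableSet_ball]
    _ = ∫ p in Complex.polarCoord.target,
          (Iio r ×ˢ univ).indicator (fun p : ℝ × ℝ ↦ p.1 • u (circleMap c p.1 p.2)) p := by
        rw [← Complex.integral_comp_polarCoord_symm]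
        exact setIntegral_congr_fun Complex.polarCoord.open_target.measurableSet hind
    _ = ∫ p in Ioo 0 r ×ˢ Ioo (-π) π, p.1 • u (circleMap c p.1 p.2) := by
        rw [setIntegral_indicator (measurableSet_Iio.prod MeasurableSet.univ),
          Complex.polarCoord_target, prod_inter_prod, Ioi_inter_Iio, inter_univ]
    _ = ∫ t in Ioo 0 r, t • ∫ θ in Ioo (-π) π, u (circleMap c t θ) := by
        rw [Measure.volume_eq_prod, setIntegral_prod _ hint]
        simp only [integral_smul]
    _ = ∫ t in 0..r, (2 * π * t) • Real.circleAverage u c t := by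
        rw [intervalIntegral.integral_of_le hr, integral_Ioc_eq_integral_Ioo]
        simp only [← two_pi_smul_circleAverage_eq_integral, smul_smul, mul_comm]

/-- The sub-mean value inequality on every closed disc in `s`; together with upper semicontinuity
it characterises the subharmonic functions on an open set `s`. -/
def SubMeanOn (u : ℂ → ℝ) (s : Set ℂ) : Prop :=
  ∀ ⦃c : ℂ⦄ ⦃r : ℝ⦄, 0 < r → closedBall c r ⊆ s → u c ≤ Real.circleAverage u c r

lemma SubMeanOn.const_mul {u : ℂ → ℝ} {s : Set ℂ} (hu : SubMeanOn u s) {a : ℝ} (ha : 0 ≤ a) :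
    SubMeanOn (fun z ↦ a * u z) s := by
  intro c r hr hs
  calc a * u c ≤ a * Real.circleAverage u c r := by gcongr; exact hu hr hs
    _ = Real.circleAverage (fun z ↦ a * u z) c r := (Real.circleAverage_fun_smul (a := a)).symm

lemma SubMeanOn.mul_le_setIntegral_ball {u : ℂ → ℝ} {s : Set ℂ} (hu : SubMeanOn u s)
    (hcont : ContinuousOn u s) {c : ℂ} {r : ℝ} (hr : 0 < r) (hs : closedBall c r ⊆ s) :
    π * r ^ 2 * u c ≤ ∫ z in ball c r, u z := by
  have hcont' : ContinuousOn u (closedBall c r) := hcont.mono hs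
  have havg : ContinuousOn (Real.circleAverage u c) (uIcc 0 r) := by
    rw [uIcc_of_le hr.le]
    exact Real.ContinuousOn.circleAverage
      (hcont'.mono fun z hz ↦ mem_closedBall_iff_norm.2 hz.2) fun t ht ↦ ht.1
  calc π * r ^ 2 * u c = ∫ t in 0..r, (2 * π * t) • u c := by
        rw [intervalIntegral.integral_smul_const, intervalIntegral.integral_const_mul, integral_id,
          smul_eq_mul]
        ring
    _ ≤ ∫ t in 0..r, (2 * π * t) • Real.circleAverage u c t := by
        refine intervalIntegral.integral_mono_on_of_le_Ioo hr.le
          (ContinuousOn.intervalIntegrable (by fun_prop))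
          (ContinuousOn.intervalIntegrable (by fun_prop)) fun t ht ↦ ?_
        exact smul_le_smul_of_nonneg_left
          (hu ht.1 ((closedBall_subset_closedBall ht.2.le).trans hs))
          (mul_nonneg Real.two_pi_pos.le ht.1.le)
    _ = ∫ z in ball c r, u z := (setIntegral_ball_eq_integral_circleAverage hr.le hcont').symm

lemma tendstoUniformlyOn_zero_of_subMeanOn {u : ℕ → ℂ → ℝ} {s K : Set ℂ} {C δ : ℝ}
    (hs : MeasurableSet s) (hs' : volume s ≠ ∞)
    (hsub : ∀ n, SubMeanOn (u n) s) (hcont : ∀ n, ContinuousOn (u n) s)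
    (hnonneg : ∀ n, ∀ z ∈ s, 0 ≤ u n z) (hC : ∀ n, ∀ z ∈ s, u n z ≤ C)
    (hlim : ∀ z ∈ s, Tendsto (u · z) atTop (𝓝 0)) (hδ : 0 < δ)
    (hK : ∀ z ∈ K, closedBall z δ ⊆ s) :
    TendstoUniformlyOn u 0 atTop K := by
  have hbound : ∀ n, ∀ᵐ z ∂volume.restrict s, ‖u n z‖ ≤ C := fun n ↦ by
    filter_upwards [ae_restrict_mem hs] with z hz
    simpa [abs_of_nonneg (hnonneg n z hz)] using hC n z hz
  have hmeas : ∀ n, AEStronglyMeasurable (u n) (volume.restrict s) := fun n ↦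
    (hcont n).aestronglyMeasurable hs
  have hint : ∀ n, IntegrableOn (u n) s := fun n ↦ .of_bound hs'.lt_top (hmeas n) C (hbound n)
  have hzero : Tendsto (fun n ↦ ∫ z in s, u n z) atTop (𝓝 0) := by
    simpa using tendsto_integral_of_dominated_convergence (fun _ ↦ C) hmeas
      (integrableOn_const hs') hbound (ae_restrict_of_forall_mem hs hlim)
  rw [Metric.tendstoUniformlyOn_iff]
  intro ε hε
  filter_upwards [hzero.eventually_lt_const (show 0 < π * δ ^ 2 * ε by positivity)] with n hn z hz
  have hmean : π * δ ^ 2 * u n z < π * δ ^ 2 * ε :=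
    calc π * δ ^ 2 * u n z ≤ ∫ x in ball z δ, u n x :=
          (hsub n).mul_le_setIntegral_ball (hcont n) hδ (hK z hz)
      _ ≤ ∫ x in s, u n x := setIntegral_mono_set (hint n)
          (ae_restrict_of_forall_mem hs (hnonneg n))
          (ball_subset_closedBall.trans (hK z hz)).eventuallyLE
      _ < π * δ ^ 2 * ε := hn
  have hz' := hnonneg n z (hK z hz (mem_closedBall_self hδ.le))
  simpa [dist_comm, abs_of_nonneg hz'] using lt_of_mul_lt_mul_left hmean (by positivity)

lemma subMeanOn_posLog_norm {f : ℂ → E} {s : Set ℂ} (hf : AnalyticOnNhd ℂ f s) :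
    SubMeanOn (fun z ↦ log⁺ ‖f z‖) s := fun _ _ hr hs ↦
  posLog_norm_le_circleAverage hr (hf.mono hs)

lemma le_pow_of_inv_mul_posLog_le {x q : ℝ} {n : ℕ} (hn : n ≠ 0) (hq : 0 < q)
    (h : (n : ℝ)⁻¹ * log⁺ x ≤ Real.log q) : x ≤ q ^ n := by
  have hn' : (0 : ℝ) < n := by positivity
  have hlog : log⁺ x ≤ n * Real.log q := (inv_mul_le_iff₀ hn').1 h
  calc x ≤ Real.exp (Real.log x) := Real.le_exp_log x
    _ ≤ Real.exp (n * Real.log q) := Real.exp_le_exp.2 ((le_max_right _ _).trans hlog)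
    _ = q ^ n := by rw [Real.exp_nat_mul, Real.exp_log hq]

lemma inv_mul_posLog_le_of_le_mul_pow {x M q : ℝ} {n : ℕ} (hx : 0 ≤ x) (h : x ≤ M * q ^ n) :
    (n : ℝ)⁻¹ * log⁺ x ≤ log⁺ M + log⁺ q := by
  have hlog : log⁺ x ≤ log⁺ M + n * log⁺ q :=
    calc log⁺ x ≤ log⁺ (M * q ^ n) := Real.posLog_le_posLog hx h
      _ ≤ log⁺ M + n * log⁺ q := Real.posLog_mul.trans_eq (by rw [Real.posLog_pow])
  have hM : 0 ≤ log⁺ M := Real.posLog_nonneg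
  rcases n.eq_zero_or_pos with rfl | hn
  · simpa using add_nonneg hM Real.posLog_nonneg
  · have hn' : (1 : ℝ) ≤ n := by exact_mod_cast hn
    rw [inv_mul_le_iff₀ (by positivity)]
    nlinarith

lemma tendstoUniformlyOn_inv_mul_posLog_norm {f : ℕ → ℂ → E} {b : ℂ} {R r M q : ℝ}
    (hf : ∀ n, AnalyticOnNhd ℂ (f n) (ball b R)) (hM : ∀ n, ∀ w ∈ ball b R, ‖f n w‖ ≤ M * q ^ n)
    (hbdd : ∀ w ∈ ball b R, ∃ C, ∀ n, ‖f n w‖ ≤ C) (hr : r < R) :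
    TendstoUniformlyOn (fun (n : ℕ) w ↦ (n : ℝ)⁻¹ * log⁺ ‖f n w‖) 0 atTop (ball b r) := by
  have hnonneg : ∀ (n : ℕ) w, 0 ≤ (n : ℝ)⁻¹ * log⁺ ‖f n w‖ := fun n w ↦
    mul_nonneg (by positivity) Real.posLog_nonneg
  refine tendstoUniformlyOn_zero_of_subMeanOn measurableSet_ball measure_ball_lt_top.ne
    (fun n ↦ (subMeanOn_posLog_norm (hf n)).const_mul (by positivity))
    (fun n ↦ (Real.continuous_posLog.comp_continuousOn (hf n).continuousOn.norm).const_mul _)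
    (fun n w _ ↦ hnonneg n w)
    (fun n w hw ↦ inv_mul_posLog_le_of_le_mul_pow (norm_nonneg _) (hM n w hw)) (fun w hw ↦ ?_)
    (half_pos (sub_pos.2 hr)) fun w hw ↦ closedBall_subset_ball' (by linarith [mem_ball.1 hw])
  obtain ⟨C, hC⟩ := hbdd w hw
  have hzero : Tendsto (fun n : ℕ ↦ (n : ℝ)⁻¹ * log⁺ C) atTop (𝓝 0) := by
    simpa using tendsto_inv_atTop_nhds_zero_nat.mul_const (log⁺ C)
  exact squeeze_zero (hnonneg · w) (fun n ↦ mul_le_mul_of_nonneg_left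
    (Real.posLog_le_posLog (norm_nonneg _) (hC n)) (by positivity)) hzero

lemma eventually_norm_le_pow {f : ℕ → ℂ → E} {b : ℂ} {R r M q p : ℝ}
    (hf : ∀ n, AnalyticOnNhd ℂ (f n) (ball b R)) (hM : ∀ n, ∀ w ∈ ball b R, ‖f n w‖ ≤ M * q ^ n)
    (hbdd : ∀ w ∈ ball b R, ∃ C, ∀ n, ‖f n w‖ ≤ C) (hr : r < R) (hp : 1 < p) :
    ∀ᶠ n in atTop, ∀ w ∈ ball b r, ‖f n w‖ ≤ p ^ n := by
  have hunif := tendstoUniformlyOn_inv_mul_posLog_norm hf hM hbdd hr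
  filter_upwards [Metric.tendstoUniformlyOn_iff.1 hunif _ (Real.log_pos hp), eventually_ne_atTop 0]
    with n hn hn0 w hw
  refine le_pow_of_inv_mul_posLog_le hn0 (one_pos.trans hp) ((le_abs_self _).trans ?_)
  simpa using (hn w hw).le

lemma exists_forall_norm_mul_pow_le [CompleteSpace E] {c : ℕ → ℂ → E} {b : ℂ}
    {R r s t δ M : ℝ} (hc : ∀ n, DifferentiableOn ℂ (c n) (ball b R)) (hδ : 0 < δ)
    (hM : ∀ n, ∀ w ∈ ball b R, ‖c n w‖ * δ ^ n ≤ M)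
    (hs : ∀ w ∈ ball b R, ∃ C, ∀ n, ‖c n w‖ * s ^ n ≤ C) (ht : 0 < t) (hts : t < s) (hr : r < R) :
    ∃ K, ∀ n, ∀ w ∈ ball b r, ‖c n w‖ * t ^ n ≤ K := by
  have hs0 : 0 < s := ht.trans hts
  have hnorm : ∀ n w, ‖(s : ℂ) ^ n • c n w‖ = ‖c n w‖ * s ^ n := fun n w ↦ by
    rw [norm_smul, norm_pow, norm_real, Real.norm_of_nonneg hs0.le, mul_comm]
  have hrescale : ∀ a, 0 < a → ∀ n, ∀ w ∈ ball b R, ‖c n w‖ * a ^ n ≤ M * (a / δ) ^ n := by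
    intro a ha n w hw
    calc ‖c n w‖ * a ^ n = ‖c n w‖ * δ ^ n * (a / δ) ^ n := by
          rw [mul_assoc, ← mul_pow, mul_div_cancel₀ _ hδ.ne']
      _ ≤ M * (a / δ) ^ n := by gcongr; exact hM n w hw
  have hev : ∀ᶠ n in atTop, ∀ w ∈ ball b r, ‖(s : ℂ) ^ n • c n w‖ ≤ (s / t) ^ n := by
    refine eventually_norm_le_pow (M := M) (q := s / δ)
      (fun n ↦ ((hc n).const_smul _).analyticOnNhd isOpen_ball)
      (fun n w hw ↦ ?_) (by simpa only [hnorm] using hs) hr ((one_lt_div ht).2 hts)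
    exact (hnorm n w).trans_le (hrescale s hs0 n w hw)
  obtain ⟨N, hN⟩ := eventually_atTop.1 hev
  obtain ⟨K, hK⟩ := ((finite_lt_nat N).image fun n ↦ M * (t / δ) ^ n).bddAbove
  refine ⟨max 1 K, fun n w hw ↦ ?_⟩
  rcases le_or_gt N n with hn | hn
  · refine le_max_of_le_left ?_
    have := hN n hn w hw
    rw [hnorm, div_pow, le_div_iff₀ (by positivity)] at this
    nlinarith [pow_pos hs0 n]
  · have := hrescale t ht n w (ball_subset_ball hr.le hw)
    exact le_max_of_le_right (this.trans (hK (mem_image_of_mem _ hn)))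

/-- The operator sending a bounded sequence `x` to the sum `∑ zⁿ xₙ` of the power series with these
coefficients, for `‖z‖ < 1`. -/
noncomputable def powerSeriesEval (E : Type*) [NormedAddCommGroup E] [NormedSpace ℂ E] (z : ℂ) :
    lp (fun _ : ℕ ↦ E) ∞ →L[ℂ] E :=
  ∑' n, z ^ n • lp.evalCLM ℂ (fun _ ↦ E) ∞ n

lemma norm_pow_smul_evalCLM_le (z : ℂ) (n : ℕ) :
    ‖z ^ n • lp.evalCLM ℂ (fun _ : ℕ ↦ E) ∞ n‖ ≤ ‖z‖ ^ n := by
  rw [norm_smul, norm_pow]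
  refine mul_le_of_le_one_right (by positivity) ?_
  exact LinearMap.mkContinuous_norm_le _ zero_le_one _

lemma hasSum_powerSeriesEval [CompleteSpace E] {z : ℂ} (hz : ‖z‖ < 1)
    (x : lp (fun _ : ℕ ↦ E) ∞) : HasSum (fun n ↦ z ^ n • x n) (powerSeriesEval E z x) := by
  have hsum : Summable fun n ↦ z ^ n • lp.evalCLM ℂ (fun _ : ℕ ↦ E) ∞ n :=
    .of_norm_bounded (summable_geometric_of_lt_one (norm_nonneg z) hz) (norm_pow_smul_evalCLM_le z)
  exact hsum.hasSum.mapL (ContinuousLinearMap.apply ℂ E x)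

lemma analyticOnNhd_powerSeriesEval [CompleteSpace E] :
    AnalyticOnNhd ℂ (powerSeriesEval E) (ball 0 1) := by
  intro z hz
  obtain ⟨q, hzq, hq⟩ := exists_between (mem_ball_zero_iff.1 hz)
  have hq0 : 0 ≤ q := (norm_nonneg z).trans hzq.le
  have hdiff : DifferentiableOn ℂ (powerSeriesEval E) (ball 0 q) := by
    refine Complex.differentiableOn_tsum_of_summable_norm (summable_geometric_of_lt_one hq0 hq)
      (fun n ↦ by fun_prop) isOpen_ball fun n x hx ↦ (norm_pow_smul_evalCLM_le x n).trans ?_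
    gcongr
    exact (mem_ball_zero_iff.1 hx).le
  exact hdiff.analyticOnNhd isOpen_ball z (mem_ball_zero_iff.2 hzq)

lemma exists_differentiableOn_lp_infty {ι : Type*} {c : ι → ℂ → E} {V : Set ℂ} {K : ℝ}
    (hV : IsOpen V) (hc : ∀ i, DifferentiableOn ℂ (c i) V) (hK : ∀ i, ∀ w ∈ V, ‖c i w‖ ≤ K) :
    ∃ Φ : ℂ → lp (fun _ : ι ↦ E) ∞, DifferentiableOn ℂ Φ V ∧ ∀ w ∈ V, ∀ i, Φ w i = c i w := by
  let Φ (w : ℂ) : lp (fun _ : ι ↦ E) ∞ := ⟨fun i ↦ V.indicator (c i) w, memℓp_infty ⟨max K 0, by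
    rintro _ ⟨i, rfl⟩
    by_cases hw : w ∈ V <;> simp [hw, hK i]⟩⟩
  have hΦ : ∀ w ∈ V, ∀ i, Φ w i = c i w := fun w hw i ↦ indicator_of_mem hw (c i)
  refine ⟨Φ, differentiableOn_lp_infty (M := max K 0) hV
    (fun i ↦ (hc i).congr fun w hw ↦ hΦ w hw i) fun w hw ↦ ?_, hΦ⟩
  refine lp.norm_le_of_forall_le (le_max_right K 0) fun i ↦ ?_
  rw [hΦ w hw]
  exact (hK i w hw).trans (le_max_left K 0)

lemma analyticOnNhd_of_hasSum_pow_smul [CompleteSpace E] {F : ℂ → ℂ → E} {c : ℕ → ℂ → E}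
    {z₀ : ℂ} {s K : ℝ} {V : Set ℂ} (hV : IsOpen V) (hc : ∀ n, DifferentiableOn ℂ (c n) V)
    (hK : ∀ n, ∀ w ∈ V, ‖c n w‖ * s ^ n ≤ K)
    (hF : ∀ z ∈ ball z₀ s, ∀ w ∈ V, HasSum (fun n ↦ (z - z₀) ^ n • c n w) (F z w)) :
    AnalyticOnNhd ℂ (fun p : ℂ × ℂ ↦ F p.1 p.2) (ball z₀ s ×ˢ V) := by
  rintro ⟨z₁, w₁⟩ ⟨hz₁, hw₁⟩
  have hs : 0 < s := pos_of_mem_ball hz₁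
  have hs' : (s : ℂ) ≠ 0 := mod_cast hs.ne'
  obtain ⟨Φ, hΦ, hΦc⟩ := exists_differentiableOn_lp_infty (c := fun n w ↦ (s : ℂ) ^ n • c n w)
    (K := K) hV (fun n ↦ (hc n).const_smul _) fun n w hw ↦ by
      simpa [norm_smul, abs_of_pos hs, mul_comm] using hK n w hw
  have hunit : ∀ z ∈ ball z₀ s, ‖(z - z₀) / s‖ < 1 := fun z hz ↦ by
    rw [norm_div, norm_real, Real.norm_of_nonneg hs.le, div_lt_one hs]
    exact mem_ball_iff_norm.1 hz
  have heq : ∀ z ∈ ball z₀ s, ∀ w ∈ V, powerSeriesEval E ((z - z₀) / s) (Φ w) = F z w := by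
    intro z hz w hw
    refine (hasSum_powerSeriesEval (hunit z hz) (Φ w)).unique ?_
    convert hF z hz w hw using 2 with n
    rw [hΦc w hw, smul_smul, ← mul_pow, div_mul_cancel₀ _ hs']
  have hT : AnalyticAt ℂ (fun p : ℂ × ℂ ↦ powerSeriesEval E ((p.1 - z₀) / s)) (z₁, w₁) :=
    (analyticOnNhd_powerSeriesEval _ (mem_ball_zero_iff.2 (hunit z₁ hz₁))).comp_of_eq
      ((analyticAt_fst.sub analyticAt_const).div analyticAt_const hs') rfl
  have hΦ' : AnalyticAt ℂ (fun p : ℂ × ℂ ↦ Φ p.2) (z₁, w₁) :=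
    (hΦ.analyticOnNhd hV w₁ hw₁).comp_of_eq analyticAt_snd rfl
  refine (((ContinuousLinearMap.id ℂ (lp (fun _ : ℕ ↦ E) ∞ →L[ℂ] E)).analyticAt_bilinear _).comp
    (hT.prod hΦ')).congr ?_
  filter_upwards [(isOpen_ball.prod hV).mem_nhds ⟨hz₁, hw₁⟩] with p hp
  exact heq p.1 hp.1 p.2 hp.2

/-- The Taylor coefficient `f⁽ⁿ⁾(c) / n!`. -/
noncomputable def taylorCoeff (f : ℂ → E) (c : ℂ) (n : ℕ) : E :=
  (n.factorial : ℂ)⁻¹ • iteratedDeriv n f c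

lemma norm_taylorCoeff_mul_pow_le [CompleteSpace E] {f : ℂ → E} {c : ℂ} {r M : ℝ} (n : ℕ)
    (hr : 0 < r) (hf : DiffContOnCl ℂ f (ball c r)) (hM : ∀ z ∈ sphere c r, ‖f z‖ ≤ M) :
    ‖taylorCoeff f c n‖ * r ^ n ≤ M := by
  calc ‖taylorCoeff f c n‖ * r ^ n = ‖iteratedDeriv n f c‖ / n.factorial * r ^ n := by
        rw [taylorCoeff, norm_smul, norm_inv, norm_natCast, inv_mul_eq_div]
    _ ≤ n.factorial * M / r ^ n / n.factorial * r ^ n := by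
        gcongr
        exact norm_iteratedDeriv_le_of_forall_mem_sphere_norm_le n hr hf hM
    _ = M := by field_simp

lemma exists_forall_norm_taylorCoeff_mul_pow_le [CompleteSpace E] {f : ℂ → E} {c : ℂ} {r ρ : ℝ}
    (hf : DifferentiableOn ℂ f (ball c ρ)) (hr : 0 < r) (hrρ : r < ρ) :
    ∃ C, ∀ n, ‖taylorCoeff f c n‖ * r ^ n ≤ C := by
  obtain ⟨C, hC⟩ := (isCompact_sphere c r).exists_bound_of_continuousOn
    (hf.continuousOn.mono (sphere_subset_closedBall.trans (closedBall_subset_ball hrρ)))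
  exact ⟨C, fun n ↦ norm_taylorCoeff_mul_pow_le n hr
    (hf.diffContOnCl_ball (closedBall_subset_ball hrρ)) hC⟩

lemma hasSum_pow_smul_taylorCoeff [CompleteSpace E] {f : ℂ → E} {c z : ℂ} {r : ℝ}
    (hf : DifferentiableOn ℂ f (ball c r)) (hz : z ∈ ball c r) :
    HasSum (fun n ↦ (z - c) ^ n • taylorCoeff f c n) (f z) := by
  simpa only [taylorCoeff, smul_comm ((z - c) ^ _)] using hasSum_taylorSeries_on_ball hf hz

lemma analyticOnNhd_of_norm_le_on_smaller_ball [CompleteSpace E] {F : ℂ → ℂ → E} {a b : ℂ}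
    {r ρ R M : ℝ} (hr : 0 < r) (hrρ : r ≤ ρ)
    (hfst : ∀ w ∈ ball b R, DifferentiableOn ℂ (F · w) (ball a ρ))
    (hsnd : ∀ z ∈ ball a r, DifferentiableOn ℂ (F z) (ball b R))
    (hM : ∀ z ∈ ball a r, ∀ w ∈ ball b R, ‖F z w‖ ≤ M) :
    AnalyticOnNhd ℂ (fun p : ℂ × ℂ ↦ F p.1 p.2) (ball a ρ ×ˢ ball b R) := by
  have hfst' : ∀ w ∈ ball b R, DifferentiableOn ℂ (F · w) (ball a r) := fun w hw ↦
    (hfst w hw).mono (ball_subset_ball hrρ)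
  have hcoeff : ∀ n, DifferentiableOn ℂ (fun w ↦ taylorCoeff (F · w) a n) (ball b R) := fun n ↦
    (differentiableOn_iteratedDeriv_of_norm_le n hr isOpen_ball hfst' hsnd hM).const_smul _
  have hδ : closedBall a (r / 2) ⊆ ball a r := closedBall_subset_ball (half_lt_self hr)
  have hbound : ∀ n, ∀ w ∈ ball b R, ‖taylorCoeff (F · w) a n‖ * (r / 2) ^ n ≤ M := fun n w hw ↦
    norm_taylorCoeff_mul_pow_le n (half_pos hr) ((hfst' w hw).diffContOnCl_ball hδ)
      fun z hz ↦ hM z (hδ (sphere_subset_closedBall hz)) w hw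
  rintro ⟨z, w⟩ ⟨hz, hw⟩
  obtain ⟨t, hzt, htρ⟩ := exists_between (mem_ball.1 hz)
  obtain ⟨s, hts, hsρ⟩ := exists_between htρ
  obtain ⟨R', hwR', hR'⟩ := exists_between (mem_ball.1 hw)
  have ht : 0 < t := dist_nonneg.trans_lt hzt
  obtain ⟨K, hK⟩ := exists_forall_norm_mul_pow_le hcoeff (half_pos hr) hbound
    (fun v hv ↦ exists_forall_norm_taylorCoeff_mul_pow_le (hfst v hv) (ht.trans hts) hsρ)
    ht hts hR'
  have hR'R : ball b R' ⊆ ball b R := ball_subset_ball hR'.le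
  exact analyticOnNhd_of_hasSum_pow_smul isOpen_ball (fun n ↦ (hcoeff n).mono hR'R) hK
    (fun x hx v hv ↦ hasSum_pow_smul_taylorCoeff (hfst v (hR'R hv)) (ball_subset_ball htρ.le hx))
    (z, w) ⟨hzt, hwR'⟩

lemma exists_isOpen_forall_le_of_lowerSemicontinuousOn {X ι : Type*} [TopologicalSpace X]
    [BaireSpace X] {U : Set X} {f : ι → X → ℝ} (hU : IsOpen U) (hne : U.Nonempty)
    (hf : ∀ i, LowerSemicontinuousOn (f i) U) (hbdd : ∀ x ∈ U, ∃ C, ∀ i, f i x ≤ C) :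
    ∃ V ⊆ U, IsOpen V ∧ V.Nonempty ∧ ∃ C, ∀ x ∈ V, ∀ i, f i x ≤ C := by
  have : BaireSpace U := hU.baireSpace
  have : Nonempty U := hne.to_subtype
  have hclosed : ∀ n : ℕ, IsClosed {x : U | ∀ i, f i x ≤ n} := fun n ↦ by
    simp only [ofPred_forall]
    exact isClosed_iInter fun i ↦ (lowerSemicontinuous_restrict_iff.2 (hf i)).isClosed_preimage n
  have hcover : ⋃ n : ℕ, {x : U | ∀ i, f i x ≤ n} = univ := eq_univ_of_forall fun x ↦ by
    obtain ⟨C, hC⟩ := hbdd x x.2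
    obtain ⟨n, hn⟩ := exists_nat_ge C
    exact mem_iUnion.2 ⟨n, fun i ↦ (hC i).trans hn⟩
  obtain ⟨n, hn⟩ := nonempty_interior_of_iUnion_of_closed hclosed hcover
  refine ⟨(↑) '' interior {x : U | ∀ i, f i x ≤ n}, Subtype.coe_image_subset U _,
    hU.isOpenMap_subtype_val _ isOpen_interior, hn.image _, n, ?_⟩
  rintro _ ⟨x, hx, rfl⟩
  exact interior_subset hx

/-- **Hartogs' theorem** on separate analyticity. -/
theorem analyticOnNhd_of_separately_differentiableOn [CompleteSpace E] {F : ℂ → ℂ → E}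
    {U V : Set ℂ} (hU : IsOpen U) (hV : IsOpen V)
    (hfst : ∀ w ∈ V, DifferentiableOn ℂ (F · w) U)
    (hsnd : ∀ z ∈ U, DifferentiableOn ℂ (F z) V) :
    AnalyticOnNhd ℂ (fun p : ℂ × ℂ ↦ F p.1 p.2) (U ×ˢ V) := by
  rintro ⟨a, b⟩ ⟨ha, hb⟩
  obtain ⟨ρ, hρ, hρU⟩ := Metric.isOpen_iff.1 hU a ha
  obtain ⟨R, hR, hRV⟩ := nhds_basis_closedBall.mem_iff.1 (hV.mem_nhds hb)
  have hhalf : ball a (ρ / 2) ⊆ U := (ball_subset_ball (half_le_self hρ.le)).trans hρU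
  obtain ⟨W, hWa, hW, ⟨z₀, hz₀⟩, M, hM⟩ := exists_isOpen_forall_le_of_lowerSemicontinuousOn
    (f := fun (w : closedBall b R) z ↦ ‖F z w‖) isOpen_ball (nonempty_ball.2 (half_pos hρ))
    (fun w ↦ ((hfst w (hRV w.2)).continuousOn.norm.mono hhalf).lowerSemicontinuousOn)
    fun z hz ↦ by
      obtain ⟨C, hC⟩ := (isCompact_closedBall b R).exists_bound_of_continuousOn
        ((hsnd z (hhalf hz)).continuousOn.mono hRV)
      exact ⟨C, fun w ↦ hC w w.2⟩
  obtain ⟨r, hr, hrW⟩ := Metric.isOpen_iff.1 hW z₀ hz₀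
  have hz₀a : dist z₀ a < ρ / 2 := hWa hz₀
  have hz₀U : ball z₀ (ρ / 2) ⊆ U := (ball_subset_ball' (by linarith)).trans hρU
  have hmin : ball z₀ (min r (ρ / 2)) ⊆ W := (ball_subset_ball (min_le_left _ _)).trans hrW
  have hRV' : ball b R ⊆ V := ball_subset_closedBall.trans hRV
  exact analyticOnNhd_of_norm_le_on_smaller_ball (lt_min hr (half_pos hρ)) (min_le_right _ _)
    (fun w hw ↦ (hfst w (hRV' hw)).mono hz₀U)
    (fun z hz ↦ (hsnd z (hhalf (hWa (hmin hz)))).mono hRV')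
    (fun z hz w hw ↦ hM z (hmin hz) ⟨w, ball_subset_closedBall hw⟩)
    (a, b) ⟨mem_ball_comm.1 hz₀a, mem_ball_self hR⟩

end Hartogs

theorem kernel_jointly_analytic (Ω : Set ℂ) (hΩ : IsOpen Ω) (k : ℂ → ℂ → ℂ)
    (hAnalytic : ∀ ω ∈ Ω, AnalyticOn ℂ (fun z : ℂ => k z ω) Ω)
    (hSym : ∀ z ∈ Ω, ∀ ω ∈ Ω, k z ω = conj (k ω z)) :
    AnalyticOn ℂ (fun p : ℂ × ℂ => k p.1 (conj p.2))
      (Ω ×ˢ ((fun w : ℂ => conj w) '' Ω)) := by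
  have hconj : (fun w : ℂ => conj w) '' Ω = conj ⁻¹' Ω :=
    congrFun (Set.image_eq_preimage_of_inverse conj_conj conj_conj) Ω
  have hopen : IsOpen (conj ⁻¹' Ω : Set ℂ) := hΩ.preimage continuous_conj
  rw [hconj]
  refine (analyticOnNhd_of_separately_differentiableOn (F := fun z w ↦ k z (conj w)) hΩ hopen
    (fun w hw ↦ (hAnalytic _ hw).differentiableOn) fun z hz w hw ↦ ?_).analyticOn
  have hkernel : DifferentiableAt ℂ (fun v ↦ k v z) (conj w) :=
    (hAnalytic z hz).differentiableOn.differentiableAt (hΩ.mem_nhds hw)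
  have hdual : DifferentiableAt ℂ (conj ∘ (fun v ↦ k v z) ∘ conj) w :=
    differentiableAt_conj_conj_iff.2 hkernel
  refine (hdual.congr_of_eventuallyEq ?_).differentiableWithinAt
  filter_upwards [hopen.mem_nhds hw] with v hv
  exact hSym z hz _ hv
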